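/- There exist constants c > 0, C > 0, and n₀ such that for all n ≥ n₀ the following holds. Let p be a prime with 2 < p ≤ exp(c·n^{1/4}), fix λ ∈ F_p, and set m = ⌈C·log p⌉. With probability at least 1 − exp(−n/9), every nonzero vector v ∈ F_p^n that is orthogonal (over F_p) to at least n − n/log p of the rows of M_n − λ·I_n has the following property: for every set T ⊆ {1,…,n} of size ⌈n/4⌉ there exist at least n/(2m) pairwise disjoint sets S ⊆ {1,…,n}∖T, each of size m, such that disc_{F_p}(v|_S) ≤ C/p². -/

import Mathlib

open Finset Matrix

noncomputable section

/-- The sign `±1` associated to a Boolean. -/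
def signb (R : Type*) [Ring R] (b : Bool) : R := if b then 1 else -1

open Classical in
/-- Uniform/counting probability of an event on a finite sample space. -/
def prob {Ω : Type*} [Fintype Ω] (E : Ω → Prop) : ℝ :=
  ((Finset.univ.filter E).card : ℝ) / (Fintype.card Ω : ℝ)

/-- The symmetric random sign matrix determined by the Boolean data `ω`
(only the entries `ω i j` with `i ≤ j` are used); it is uniformly distributed
over symmetric `±1` matrices when `ω` is uniform. -/
def symMat (R : Type*) [Ring R] {n : ℕ} (ω : Fin n → Fin n → Bool) :
    Matrix (Fin n) (Fin n) R :=
  Matrix.of fun i j => signb R (ω (min i j) (max i j))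

/-- Atom probability of a vector over `ZMod p` w.r.t. i.i.d. Rademacher signs. -/
def rho (p : ℕ) {ι : Type*} [Fintype ι] [DecidableEq ι] (w : ι → ZMod p) : ℝ :=
  ⨆ r : ZMod p, prob (fun ξ : ι → Bool => ∑ i, signb (ZMod p) (ξ i) * w i = r)

/-- Discrepancy of a vector over `ZMod p` w.r.t. i.i.d. Rademacher signs. -/
def disc (p : ℕ) {ι : Type*} [Fintype ι] [DecidableEq ι] (w : ι → ZMod p) : ℝ :=
  ⨆ x : ZMod p,
    |prob (fun ξ : ι → Bool => ∑ i, signb (ZMod p) (ξ i) * w i = x) - 1 / (p : ℝ)|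


/- A nonzero `v` violating the conclusion for some `T` leaves a set `R` of about `n / 4` coordinates
containing no `m`-set of small discrepancy. Adding coordinates greedily to a lazy version of the
walk `∑ ξ_i v_i` therefore gets stuck after at most `m` steps: every remaining coordinate is almost
a period of the walk restricted to a small set `S`. Almost-periods at tolerance `η` double into
almost-periods at tolerance `4 η`, so by Cauchy–Davenport they form either `{0}` or a set smaller
by a factor `2 ^ J` than the inverse return probability of the walk. Hence few vectors are stuck:
given `v` on `S`, every stuck coordinate lies in a fixed small set. Resampling the entries between
`S` and its complement makes the rows outside `S` independent, so a fixed `v` is orthogonal to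
almost all rows with probability about `(2 P_S) ^ n`, where `P_S` is the return probability on `S`,
and the union bound over the stuck (or sparse) vectors wins. -/

open scoped BigOperators Pointwise

section UniformProbability

variable {Ω α : Type*} [Fintype Ω]

lemma prob_eq_expect (E : Ω → Prop) [DecidablePred E] :
    prob E = 𝔼 ω, if E ω then (1 : ℝ) else 0 := by
  rw [Fintype.expect_eq_sum_div_card, sum_boole, prob]
  congr

lemma prob_nonneg (E : Ω → Prop) : 0 ≤ prob E := by
  unfold prob; positivity

lemma prob_mono {E F : Ω → Prop} (h : ∀ ω, E ω → F ω) : prob E ≤ prob F := by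
  classical
  simp only [prob_eq_expect]
  refine expect_le_expect fun ω _ ↦ ?_
  by_cases hE : E ω
  · simp [hE, h ω hE]
  · simp only [hE, if_false]; positivity

lemma prob_of_forall [Nonempty Ω] {E : Ω → Prop} (h : ∀ ω, E ω) : prob E = 1 := by
  classical
  simp [prob_eq_expect, h]

lemma one_sub_prob_not [Nonempty Ω] (E : Ω → Prop) : 1 - prob (fun ω ↦ ¬ E ω) = prob E := by
  classical
  rw [prob_eq_expect, prob_eq_expect, sub_eq_iff_eq_add, ← expect_add_distrib,
    ← Fintype.expect_one (ι := Ω)]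
  exact expect_congr rfl fun ω _ ↦ by by_cases h : E ω <;> simp [h]

lemma prob_or_le (E F : Ω → Prop) : prob (fun ω ↦ E ω ∨ F ω) ≤ prob E + prob F := by
  classical
  simp only [prob_eq_expect, ← expect_add_distrib]
  refine expect_le_expect fun ω _ ↦ ?_
  by_cases hE : E ω <;> by_cases hF : F ω <;> simp [hE, hF]

lemma prob_exists_mem_le_sum (V : Finset α) (E : α → Ω → Prop) :
    prob (fun ω ↦ ∃ a ∈ V, E a ω) ≤ ∑ a ∈ V, prob (E a) := by
  classical
  induction V using Finset.induction_on with
  | empty => simp [prob]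
  | insert a V ha ih =>
    simp only [exists_mem_insert, sum_insert ha]
    exact (prob_or_le _ _).trans (by gcongr)

lemma prob_exists_mem_le_card_mul (V : Finset α) (E : α → Ω → Prop) {N : ℝ}
    (h : ∀ a ∈ V, prob (E a) ≤ N) : prob (fun ω ↦ ∃ a ∈ V, E a ω) ≤ #V * N :=
  (prob_exists_mem_le_sum V E).trans <| by simpa using sum_le_card_nsmul V _ N h

lemma prob_exists_and_le_card_mul [Fintype α] {P : α → Prop} {E : α → Ω → Prop} {N : ℝ}
    (hN : 0 ≤ N) (h : ∀ a, P a → prob (E a) ≤ N) :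
    prob (fun ω ↦ ∃ a, P a ∧ E a ω) ≤ Fintype.card α * N := by
  classical
  have hfilter := prob_exists_mem_le_card_mul {a | P a} E fun a ha ↦ h a (mem_filter.1 ha).2
  simp only [mem_filter_univ] at hfilter
  refine hfilter.trans ?_
  gcongr
  exact card_le_univ _

lemma prob_mul_le_expect {E : Ω → Prop} {f : Ω → ℝ} {c : ℝ} (hf : ∀ ω, 0 ≤ f ω)
    (hE : ∀ ω, E ω → c ≤ f ω) : prob E * c ≤ 𝔼 ω, f ω := by
  classical
  rw [prob_eq_expect, expect_mul]
  refine expect_le_expect fun ω _ ↦ ?_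
  by_cases h : E ω <;> simp [h, hE, hf]

lemma expect_prod_pi {ι β 𝕜 : Type*} [Fintype ι] [DecidableEq ι] [Fintype β] [Nonempty β]
    [Field 𝕜] [CharZero 𝕜] (s : Finset ι) (g : ι → β → 𝕜) :
    𝔼 ξ : ι → β, ∏ i ∈ s, g i (ξ i) = ∏ i ∈ s, 𝔼 b, g i b := by
  have hs : ∀ f : ι → 𝕜, ∏ i ∈ s, f i = ∏ i, if i ∈ s then f i else 1 := fun f ↦ by
    rw [prod_ite_mem, univ_inter]
  have hg : ∀ i, (if i ∈ s then 𝔼 b, g i b else 1) = 𝔼 b, if i ∈ s then g i b else 1 := fun i ↦ by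
    split_ifs <;> simp
  simp only [hs, hg]
  simp only [Fintype.expect_eq_sum_div_card, prod_div_distrib, prod_const, Fintype.card_fun,
    Nat.cast_pow, card_univ, prod_univ_sum, Fintype.piFinset_univ]

lemma expect_le_of_forall_expect_perm_le {Ξ : Type*} [Fintype Ξ] [Nonempty Ξ] [Nonempty Ω]
    (φ : Ξ → Equiv.Perm Ω) (f : Ω → ℝ) {c : ℝ} (h : ∀ ω, 𝔼 ξ, f (φ ξ ω) ≤ c) :
    𝔼 ω, f ω ≤ c :=
  calc 𝔼 ω, f ω = 𝔼 ξ, 𝔼 ω, f (φ ξ ω) := by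
        simp only [fun ξ ↦ Fintype.expect_equiv (φ ξ) (fun ω ↦ f (φ ξ ω)) f fun _ ↦ rfl,
          Fintype.expect_const]
    _ = 𝔼 ω, 𝔼 ξ, f (φ ξ ω) := expect_comm _ _ _
    _ ≤ 𝔼 _ω : Ω, c := expect_le_expect fun ω _ ↦ h ω
    _ = c := Fintype.expect_const c

end UniformProbability

section CosChar

variable {p : ℕ} [NeZero p]

/-- The function `x ↦ cos (2πx / p)` on `ZMod p`. -/
def cosChar (x : ZMod p) : ℝ := (ZMod.stdAddChar x).re

lemma cosChar_zero : cosChar (0 : ZMod p) = 1 := by simp [cosChar]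

lemma cosChar_sq_add_im_sq (x : ZMod p) :
    cosChar x ^ 2 + (ZMod.stdAddChar x : ℂ).im ^ 2 = 1 := by
  have h := Complex.sq_norm (ZMod.stdAddChar x : ℂ)
  rw [AddChar.norm_apply, Complex.normSq_apply] at h
  rw [cosChar, sq, sq, ← h, one_pow]

lemma cosChar_le_one (x : ZMod p) : cosChar x ≤ 1 := by
  nlinarith [cosChar_sq_add_im_sq x, sq_nonneg (ZMod.stdAddChar x : ℂ).im]

lemma neg_one_le_cosChar (x : ZMod p) : -1 ≤ cosChar x := by
  nlinarith [cosChar_sq_add_im_sq x, sq_nonneg (ZMod.stdAddChar x : ℂ).im]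

lemma cosChar_add (x y : ZMod p) :
    cosChar (x + y) =
      cosChar x * cosChar y - (ZMod.stdAddChar x : ℂ).im * (ZMod.stdAddChar y : ℂ).im := by
  rw [cosChar, AddChar.map_add_eq_mul, Complex.mul_re, cosChar, cosChar]

lemma cosChar_mul_cosChar (x y : ZMod p) :
    cosChar x * cosChar y = (cosChar (x + y) + cosChar (x - y)) / 2 := by
  have hcos : cosChar (-y) = cosChar y := by
    rw [cosChar, AddChar.map_neg_eq_conj, Complex.conj_re, cosChar]
  rw [sub_eq_add_neg, cosChar_add, cosChar_add, hcos, AddChar.map_neg_eq_conj, Complex.conj_im]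
  ring

lemma one_sub_cosChar_add_le (x y : ZMod p) :
    1 - cosChar (x + y) ≤ 2 * (1 - cosChar x) + 2 * (1 - cosChar y) := by
  rw [cosChar_add]
  nlinarith [cosChar_sq_add_im_sq x, cosChar_sq_add_im_sq y,
    sq_nonneg (cosChar x + cosChar y - 2),
    sq_nonneg ((ZMod.stdAddChar x : ℂ).im - (ZMod.stdAddChar y : ℂ).im)]

lemma abs_cosChar_le (x : ZMod p) : |cosChar x| ≤ 3 / 4 + 1 / 4 * cosChar (2 * x) := by
  rw [two_mul, cosChar_add, abs_le]
  constructor <;>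
    nlinarith [cosChar_sq_add_im_sq x, sq_nonneg (cosChar x - 1), sq_nonneg (cosChar x + 1)]

lemma expect_stdAddChar_mul (x : ZMod p) :
    𝔼 t : ZMod p, (ZMod.stdAddChar (t * x) : ℂ) = if x = 0 then 1 else 0 := by
  rw [Fintype.expect_eq_sum_div_card, AddChar.sum_mulShift x (ZMod.isPrimitive_stdAddChar p)]
  split_ifs <;> simp

lemma expect_cosChar_mul (x : ZMod p) :
    𝔼 t : ZMod p, cosChar (t * x) = if x = 0 then 1 else 0 := by
  have h := congr_arg Complex.re (expect_stdAddChar_mul x)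
  simp only [Fintype.expect_eq_sum_div_card, ← Complex.ofReal_natCast, Complex.div_ofReal_re,
    Complex.re_sum] at h
  rw [Fintype.expect_eq_sum_div_card]
  simp only [cosChar, h]
  split_ifs <;> simp

end CosChar

section LazyWalk

variable {p : ℕ} [NeZero p] {ι : Type*} {S S' : Finset ι} {v u : ι → ZMod p}

/-- The characteristic function at frequency `t` of the lazy walk with steps `v j`, `j ∈ S`: each
step is skipped with probability `3 / 4`, and is `v j` or `-v j` with probability `1 / 8` each. -/
def lazyWeight (S : Finset ι) (v : ι → ZMod p) (t : ZMod p) : ℝ :=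
  ∏ j ∈ S, (3 / 4 + 1 / 4 * cosChar (t * v j))

/-- The probability that the lazy walk with steps `v j`, `j ∈ S`, ends at `x`, defined by Fourier
inversion. The laziness makes all Fourier coefficients positive. -/
def lazyProb (S : Finset ι) (v : ι → ZMod p) (x : ZMod p) : ℝ :=
  𝔼 t, lazyWeight S v t * cosChar (t * x)

/-- The excess of `lazyProb` over the uniform probability `1 / p`. -/
def lazyExcess (S : Finset ι) (v : ι → ZMod p) (x : ZMod p) : ℝ := lazyProb S v x - 1 / p

lemma lazyWeight_factor_pos (x : ZMod p) : 0 < 3 / 4 + 1 / 4 * cosChar x := by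
  linarith [neg_one_le_cosChar x]

lemma lazyWeight_pos (S : Finset ι) (v : ι → ZMod p) (t : ZMod p) : 0 < lazyWeight S v t :=
  prod_pos fun _ _ ↦ lazyWeight_factor_pos _

lemma lazyWeight_anti (h : S ⊆ S') (v : ι → ZMod p) (t : ZMod p) :
    lazyWeight S' v t ≤ lazyWeight S v t := by
  classical
  rw [lazyWeight, ← prod_sdiff h]
  exact mul_le_of_le_one_left (lazyWeight_pos S v t).le <|
    prod_le_one (fun _ _ ↦ (lazyWeight_factor_pos _).le)
      fun j _ ↦ by linarith [cosChar_le_one (t * v j)]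

lemma lazyWeight_zero (S : Finset ι) (v : ι → ZMod p) : lazyWeight S v 0 = 1 :=
  prod_eq_one fun _ _ ↦ by rw [zero_mul, cosChar_zero]; norm_num

lemma lazyProb_congr (h : ∀ i ∈ S, v i = u i) : lazyProb S v = lazyProb S u := by
  funext x
  refine expect_congr rfl fun t _ ↦ ?_
  rw [lazyWeight, prod_congr rfl fun i hi ↦ by rw [h i hi], lazyWeight]

lemma lazyProb_apply_zero (S : Finset ι) (v : ι → ZMod p) :
    lazyProb S v 0 = 𝔼 t, lazyWeight S v t := by
  simp only [lazyProb, mul_zero, cosChar_zero, mul_one]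

lemma lazyProb_apply_zero_anti (h : S ⊆ S') (v : ι → ZMod p) :
    lazyProb S' v 0 ≤ lazyProb S v 0 := by
  rw [lazyProb_apply_zero, lazyProb_apply_zero]
  exact expect_le_expect fun t _ ↦ lazyWeight_anti h v t

lemma lazyProb_empty (v : ι → ZMod p) (x : ZMod p) :
    lazyProb ∅ v x = if x = 0 then 1 else 0 := by
  simp only [lazyProb, lazyWeight, prod_empty, one_mul, expect_cosChar_mul]

lemma lazyProb_apply_zero_le_one (S : Finset ι) (v : ι → ZMod p) : lazyProb S v 0 ≤ 1 := by
  simpa [lazyProb_empty] using lazyProb_apply_zero_anti (empty_subset S) v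

lemma lazyProb_insert [DecidableEq ι] {i : ι} (hi : i ∉ S) (v : ι → ZMod p) (x : ZMod p) :
    lazyProb (insert i S) v x =
      3 / 4 * lazyProb S v x + 1 / 8 * (lazyProb S v (x + v i) + lazyProb S v (x - v i)) := by
  simp only [lazyProb, mul_expect, ← expect_add_distrib]
  refine expect_congr rfl fun t _ ↦ ?_
  rw [lazyWeight, prod_insert hi, ← lazyWeight, mul_add t, mul_sub t]
  linear_combination 1 / 4 * lazyWeight S v t * cosChar_mul_cosChar (t * x) (t * v i)

lemma lazyProb_insert_apply_zero [DecidableEq ι] {i : ι} (hi : i ∉ S) (v : ι → ZMod p) :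
    lazyProb (insert i S) v 0 = 3 / 4 * lazyProb S v 0 + 1 / 4 * lazyProb S v (v i) := by
  simp only [lazyProb, mul_expect, ← expect_add_distrib]
  refine expect_congr rfl fun t _ ↦ ?_
  rw [lazyWeight, prod_insert hi, ← lazyWeight, mul_zero, cosChar_zero]
  ring

lemma lazyProb_singleton_apply_zero {i : ι} (hi : v i ≠ 0) : lazyProb {i} v 0 = 3 / 4 := by
  classical
  rw [← insert_empty_eq i, lazyProb_insert_apply_zero (notMem_empty i), lazyProb_empty,
    lazyProb_empty, if_pos rfl, if_neg hi]
  norm_num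

lemma lazyProb_nonneg (S : Finset ι) (v : ι → ZMod p) (x : ZMod p) : 0 ≤ lazyProb S v x := by
  classical
  induction S using Finset.induction_on generalizing x with
  | empty => rw [lazyProb_empty]; split_ifs <;> norm_num
  | insert i S hi ih =>
    rw [lazyProb_insert hi]
    linarith [ih x, ih (x + v i), ih (x - v i)]

lemma sum_lazyProb (S : Finset ι) (v : ι → ZMod p) : ∑ x, lazyProb S v x = 1 := by
  have hinner (t : ZMod p) : ∑ x, cosChar (t * x) = if t = 0 then (p : ℝ) else 0 := by
    have h := expect_cosChar_mul t
    simp only [mul_comm _ t, Fintype.expect_eq_sum_div_card, ZMod.card] at h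
    rw [div_eq_iff (NeZero.ne (p : ℝ))] at h
    simpa using h
  simp only [lazyProb, ← expect_sum_comm, ← mul_sum, hinner, mul_ite, mul_zero]
  rw [Fintype.expect_eq_sum_div_card, sum_ite_eq' univ, if_pos (mem_univ _), lazyWeight_zero,
    ZMod.card, one_mul, div_self (NeZero.ne (p : ℝ))]

lemma lazyProb_sub_lazyProb_add_le (S : Finset ι) (v : ι → ZMod p) (x y : ZMod p) :
    lazyProb S v 0 - lazyProb S v (x + y) ≤
      2 * (lazyProb S v 0 - lazyProb S v x) + 2 * (lazyProb S v 0 - lazyProb S v y) := by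
  simp only [lazyProb, ← expect_sub_distrib, mul_expect, ← expect_add_distrib]
  refine expect_le_expect fun t _ ↦ ?_
  rw [mul_add t, mul_zero, cosChar_zero]
  nlinarith [mul_le_mul_of_nonneg_left (one_sub_cosChar_add_le (t * x) (t * y))
    (lazyWeight_pos S v t).le]

lemma lazyExcess_apply_zero (S : Finset ι) (v : ι → ZMod p) :
    lazyExcess S v 0 = (∑ t ∈ univ.erase 0, lazyWeight S v t) / p := by
  rw [lazyExcess, lazyProb_apply_zero, Fintype.expect_eq_sum_div_card, ZMod.card,
    ← sum_erase_add _ _ (mem_univ (0 : ZMod p)), lazyWeight_zero]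
  ring

lemma lazyExcess_pos [Nontrivial (ZMod p)] (S : Finset ι) (v : ι → ZMod p) :
    0 < lazyExcess S v 0 := by
  rw [lazyExcess_apply_zero]
  have := NeZero.pos p
  exact div_pos (sum_pos (fun t _ ↦ lazyWeight_pos S v t) ⟨1, by simp⟩) (by positivity)

lemma one_div_lt_lazyProb [Nontrivial (ZMod p)] (S : Finset ι) (v : ι → ZMod p) :
    1 / (p : ℝ) < lazyProb S v 0 :=
  sub_pos.1 (lazyExcess_pos S v)

end LazyWalk

section AtomBound

variable {p : ℕ} [NeZero p] {ι : Type*}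

lemma expect_stdAddChar_signb_mul (x : ZMod p) :
    𝔼 b : Bool, (ZMod.stdAddChar (signb (ZMod p) b * x) : ℂ) = cosChar x := by
  rw [Fintype.expect_eq_sum_div_card, Fintype.sum_bool, Fintype.card_bool]
  simp only [signb, if_true, Bool.false_eq_true, if_false, one_mul, neg_one_mul,
    AddChar.map_neg_eq_conj, Complex.add_conj, cosChar]
  push_cast
  ring

lemma stdAddChar_sum (s : Finset ι) (f : ι → ZMod p) :
    (ZMod.stdAddChar (∑ i ∈ s, f i) : ℂ) = ∏ i ∈ s, (ZMod.stdAddChar (f i) : ℂ) := by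
  classical
  induction s using Finset.induction_on with
  | empty => simp
  | insert i s hi ih => rw [sum_insert hi, prod_insert hi, AddChar.map_add_eq_mul, ih]

variable [Fintype ι] [DecidableEq ι]

lemma prob_signb_sum_eq (S : Finset ι) (v : ι → ZMod p) (x : ZMod p) :
    (prob (fun ξ : ι → Bool ↦ ∑ i ∈ S, signb (ZMod p) (ξ i) * v i = x) : ℂ) =
      𝔼 t : ZMod p, ZMod.stdAddChar (-(t * x)) * ∏ i ∈ S, (cosChar (t * v i) : ℂ) := by
  have hfourier (ξ : ι → Bool) :
      ((if ∑ i ∈ S, signb (ZMod p) (ξ i) * v i = x then 1 else 0 : ℝ) : ℂ) =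
        𝔼 t : ZMod p, ZMod.stdAddChar (-(t * x)) *
          ∏ i ∈ S, (ZMod.stdAddChar (signb (ZMod p) (ξ i) * (t * v i)) : ℂ) := by
    have h := expect_stdAddChar_mul (∑ i ∈ S, signb (ZMod p) (ξ i) * v i - x)
    simp only [sub_eq_zero] at h
    rw [apply_ite Complex.ofReal, Complex.ofReal_one, Complex.ofReal_zero, ← h]
    refine expect_congr rfl fun t _ ↦ ?_
    rw [mul_sub, sub_eq_neg_add, AddChar.map_add_eq_mul, mul_sum, stdAddChar_sum]
    simp only [mul_left_comm]
  rw [prob_eq_expect, Complex.ofReal_expect]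
  simp only [hfourier]
  rw [expect_comm]
  refine expect_congr rfl fun t _ ↦ ?_
  rw [← mul_expect, expect_prod_pi S fun i b ↦ ZMod.stdAddChar (signb (ZMod p) b * (t * v i))]
  simp only [expect_stdAddChar_signb_mul]

/-- The atoms of the Rademacher walk are controlled by the lazy walk: `|cos θ|` is at most
`3 / 4 + 1 / 4 * cos (2θ)`, and `t ↦ 2t` permutes the nonzero frequencies. -/
lemma abs_prob_signb_sum_sub_le (hp : Odd p) (S : Finset ι) (v : ι → ZMod p) (x : ZMod p) :
    |prob (fun ξ : ι → Bool ↦ ∑ i ∈ S, signb (ZMod p) (ξ i) * v i = x) - 1 / p| ≤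
      lazyExcess S v 0 := by
  have hterm (t : ZMod p) : ‖(ZMod.stdAddChar (-(t * x)) * ∏ i ∈ S, (cosChar (t * v i) : ℂ) : ℂ)‖ ≤
      lazyWeight S v (2 * t) := by
    rw [norm_mul, AddChar.norm_apply, one_mul, norm_prod]
    refine prod_le_prod (fun _ _ ↦ norm_nonneg _) fun i _ ↦ ?_
    rw [Complex.norm_real, Real.norm_eq_abs, mul_assoc]
    exact abs_cosChar_le _
  have hdouble : ∑ t ∈ univ.erase 0, lazyWeight S v (2 * t) =
      ∑ t ∈ univ.erase 0, lazyWeight S v t := by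
    let two : (ZMod p)ˣ := ZMod.unitOfCoprime 2 hp.coprime_two_left
    refine sum_equiv two.mulLeft (fun t ↦ ?_) fun t _ ↦ by simp [two]
    simp
  rw [← Real.norm_eq_abs, ← Complex.norm_real, Complex.ofReal_sub, prob_signb_sum_eq,
    Fintype.expect_eq_sum_div_card, ZMod.card, ← sum_erase_add _ _ (mem_univ (0 : ZMod p)),
    lazyExcess_apply_zero, ← hdouble]
  simp only [zero_mul, neg_zero, AddChar.map_zero_eq_one, cosChar_zero, Complex.ofReal_one,
    prod_const_one, mul_one, Complex.ofReal_div, Complex.ofReal_natCast]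
  rw [add_div, add_sub_cancel_right, norm_div, Complex.norm_natCast]
  gcongr
  exact norm_sum_le_of_le _ fun t _ ↦ hterm t

lemma prob_signb_sum_le (hp : Odd p) (S : Finset ι) (v : ι → ZMod p) (x : ZMod p) :
    prob (fun ξ : ι → Bool ↦ ∑ i ∈ S, signb (ZMod p) (ξ i) * v i = x) ≤ lazyProb S v 0 :=
  (sub_le_sub_iff_right _).1 ((le_abs_self _).trans (abs_prob_signb_sum_sub_le hp S v x))

end AtomBound

lemma disc_le_lazyExcess {p : ℕ} [NeZero p] {ι : Type*} [DecidableEq ι] (hp : Odd p)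
    (S : Finset ι) (v : ι → ZMod p) :
    disc p (fun i : S ↦ v i) ≤ lazyExcess S v 0 := by
  have hS : lazyExcess univ (fun i : S ↦ v i) 0 = lazyExcess S v 0 := by
    simp only [lazyExcess, lazyProb, lazyWeight, univ_eq_attach,
      fun t ↦ prod_attach S fun j ↦ 3 / 4 + 1 / 4 * cosChar (t * v j)]
  rw [← hS]
  exact ciSup_le fun x ↦ abs_prob_signb_sum_sub_le hp univ _ x

section NearPeriods

variable {p : ℕ} {ι : Type*} {S : Finset ι} {v u : ι → ZMod p} {η θ : ℝ}

/-- The `η`-near-periods of the lazy walk: shifts that cost at most a proportion `η` of the excess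
return probability. -/
def nearPeriods [NeZero p] (S : Finset ι) (v : ι → ZMod p) (η : ℝ) : Finset (ZMod p) :=
  {x | (1 - η) * lazyExcess S v 0 ≤ lazyExcess S v x}

lemma mem_nearPeriods [NeZero p] {x : ZMod p} :
    x ∈ nearPeriods S v η ↔ (1 - η) * lazyExcess S v 0 ≤ lazyExcess S v x := by
  simp only [nearPeriods, mem_filter_univ]

lemma nearPeriods_congr [NeZero p] (h : ∀ i ∈ S, v i = u i) :
    nearPeriods S v η = nearPeriods S u η := by
  ext x
  simp only [mem_nearPeriods, lazyExcess, lazyProb_congr h]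

lemma nearPeriods_add_subset [NeZero p] :
    nearPeriods S v η + nearPeriods S v θ ⊆ nearPeriods S v (2 * (η + θ)) := by
  intro z hz
  obtain ⟨x, hx, y, hy, rfl⟩ := mem_add.1 hz
  rw [mem_nearPeriods] at *
  have := lazyProb_sub_lazyProb_add_le S v x y
  simp only [lazyExcess] at *
  linarith

variable [Fact p.Prime]

lemma zero_mem_nearPeriods (hη : 0 ≤ η) : 0 ∈ nearPeriods S v η := by
  rw [mem_nearPeriods]
  nlinarith [lazyExcess_pos S v]

lemma card_nearPeriods_half_mul_le (S : Finset ι) (v : ι → ZMod p) :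
    #(nearPeriods S v (1 / 2)) * (lazyProb S v 0 + 1 / p) ≤ 2 := by
  have hlarge : ∀ x ∈ nearPeriods S v (1 / 2), (lazyProb S v 0 + 1 / p) / 2 ≤ lazyProb S v x := by
    intro x hx
    rw [mem_nearPeriods] at hx
    simp only [lazyExcess] at hx
    linarith
  have hsum := (card_nsmul_le_sum _ _ _ hlarge).trans <|
    sum_le_univ_sum_of_nonneg fun x ↦ lazyProb_nonneg S v x
  rw [sum_lazyProb, nsmul_eq_mul] at hsum
  linarith

lemma card_nearPeriods_half_lt (S : Finset ι) (v : ι → ZMod p) :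
    #(nearPeriods S v (1 / 2)) < p := by
  have hp : 0 < (p : ℝ) := by exact_mod_cast NeZero.pos p
  have hP := one_div_lt_lazyProb S v
  have hpos : 0 < 1 / (p : ℝ) := by positivity
  have h := card_nearPeriods_half_mul_le S v
  by_contra! hle
  have : (p : ℝ) ≤ #(nearPeriods S v (1 / 2)) := by exact_mod_cast hle
  have : (p : ℝ) * (1 / p) = 1 := mul_one_div_cancel hp.ne'
  nlinarith

lemma two_pow_mul_card_nearPeriods_le (hη : 0 ≤ η) (j : ℕ)
    (hj : #(nearPeriods S v (4 ^ j * η)) < p) :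
    2 ^ j * (#(nearPeriods S v η) - 1) + 1 ≤ #(nearPeriods S v (4 ^ j * η)) := by
  induction j with
  | zero =>
    have : 0 < #(nearPeriods S v η) := card_pos.2 ⟨0, zero_mem_nearPeriods hη⟩
    rw [pow_zero, pow_zero, one_mul, one_mul]
    lia
  | succ j ih =>
    have hne : (nearPeriods S v (4 ^ j * η)).Nonempty := ⟨0, zero_mem_nearPeriods (by positivity)⟩
    have hdouble : nearPeriods S v (4 ^ j * η) + nearPeriods S v (4 ^ j * η) ⊆
        nearPeriods S v (4 ^ (j + 1) * η) := by
      convert nearPeriods_add_subset using 2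
      ring
    have hcauchy := ZMod.cauchy_davenport Fact.out hne hne
    have hcard := card_le_card hdouble
    have hpos := hne.card_pos
    have := ih (by lia)
    rw [pow_succ']
    lia

lemma card_nearPeriods_eq_one_or (S : Finset ι) (v : ι → ZMod p) (J : ℕ) :
    #(nearPeriods S v (1 / 2 / 4 ^ J)) = 1 ∨
      #(nearPeriods S v (1 / 2 / 4 ^ J)) * 2 ^ J * lazyProb S v 0 ≤ 4 := by
  set A := nearPeriods S v (1 / 2 / 4 ^ J)
  set B := nearPeriods S v (1 / 2)
  have hη : (0 : ℝ) ≤ 1 / 2 / 4 ^ J := by positivity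
  have hB : nearPeriods S v (4 ^ J * (1 / 2 / 4 ^ J)) = B := by
    rw [mul_div_cancel₀ _ (by positivity)]
  have hAB : 2 ^ J * (#A - 1) + 1 ≤ #B := by
    rw [← hB]
    exact two_pow_mul_card_nearPeriods_le hη J (hB ▸ card_nearPeriods_half_lt S v)
  have hA : 0 < #A := card_pos.2 ⟨0, zero_mem_nearPeriods hη⟩
  refine or_iff_not_imp_left.2 fun hA1 ↦ ?_
  have hle : (#A : ℝ) * 2 ^ J ≤ 2 * #B := by
    have : #A * 2 ^ J ≤ 2 * (2 ^ J * (#A - 1)) := by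
      rw [mul_comm, mul_left_comm]
      exact Nat.mul_le_mul_left _ (by lia)
    exact_mod_cast this.trans (by lia)
  calc #A * 2 ^ J * lazyProb S v 0
      ≤ 2 * #B * (lazyProb S v 0 + 1 / p) :=
        mul_le_mul hle (le_add_of_nonneg_right (by positivity)) (lazyProb_nonneg S v 0)
          (by positivity)
    _ ≤ 4 := by linarith [card_nearPeriods_half_mul_le S v]

lemma exists_subset_lazyExcess_le_pow_or_forall_mem_nearPeriods [DecidableEq ι] (R : Finset ι)
    (v : ι → ZMod p) (hη : η ≤ 4) (k : ℕ) :
    ∃ S ⊆ R, #S ≤ k ∧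
      (lazyExcess S v 0 ≤ (1 - η / 4) ^ k ∨ ∀ i ∈ R \ S, v i ∈ nearPeriods S v η) := by
  induction k with
  | zero =>
    refine ⟨∅, empty_subset R, le_rfl, Or.inl ?_⟩
    rw [pow_zero]
    exact (sub_le_self _ (by positivity)).trans (lazyProb_apply_zero_le_one ∅ v)
  | succ k ih =>
    obtain ⟨S, hSR, hcard, hS⟩ := ih
    by_cases hstuck : ∀ i ∈ R \ S, v i ∈ nearPeriods S v η
    · exact ⟨S, hSR, hcard.trans k.le_succ, Or.inr hstuck⟩
    have hpow := hS.resolve_right hstuck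
    push Not at hstuck
    obtain ⟨i, hi, hvi⟩ := hstuck
    rw [mem_sdiff] at hi
    rw [mem_nearPeriods, not_le] at hvi
    refine ⟨insert i S, insert_subset hi.1 hSR, (card_insert_le i S).trans (by lia), Or.inl ?_⟩
    calc lazyExcess (insert i S) v 0 = 3 / 4 * lazyExcess S v 0 + 1 / 4 * lazyExcess S v (v i) := by
          rw [lazyExcess, lazyProb_insert_apply_zero hi.2, lazyExcess, lazyExcess]
          ring
      _ ≤ lazyExcess S v 0 * (1 - η / 4) := by linarith
      _ ≤ (1 - η / 4) ^ (k + 1) := by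
          rw [pow_succ]
          gcongr
          linarith

lemma exists_subset_lazyExcess_le_or_forall_mem_nearPeriods [DecidableEq ι] (R : Finset ι)
    (v : ι → ZMod p) (hη : 0 < η) (hη4 : η ≤ 4) {k : ℕ} (hk : 8 / η * Real.log p ≤ k) :
    ∃ S ⊆ R, #S ≤ k ∧
      (lazyExcess S v 0 ≤ 1 / (p : ℝ) ^ 2 ∨ ∀ i ∈ R \ S, v i ∈ nearPeriods S v η) := by
  obtain ⟨S, hSR, hcard, hS⟩ := exists_subset_lazyExcess_le_pow_or_forall_mem_nearPeriods R v hη4 k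
  refine ⟨S, hSR, hcard, hS.imp_left fun h ↦ h.trans ?_⟩
  have hp : 0 < (p : ℝ) := by exact_mod_cast NeZero.pos p
  have hlog : 2 * Real.log p ≤ k * (η / 4) := by
    calc 2 * Real.log p = 8 / η * Real.log p * (η / 4) := by field_simp; ring
      _ ≤ k * (η / 4) := by gcongr
  calc (1 - η / 4) ^ k ≤ Real.exp (-(η / 4)) ^ k :=
        pow_le_pow_left₀ (by linarith) (Real.one_sub_le_exp_neg _) k
    _ ≤ Real.exp (-(2 * Real.log p)) := by
        rw [← Real.exp_nat_mul, mul_neg]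
        gcongr
    _ = 1 / (p : ℝ) ^ 2 := by
        rw [Real.exp_neg, two_mul, Real.exp_add, Real.exp_log hp, ← sq, one_div]

end NearPeriods

section Resampling

variable {n : ℕ} {S : Finset (Fin n)}

/-- The data `ω` with the entries between `S` and its complement flipped according to `ξ`. The
flip at `{i, j}` with `i ∉ S` and `j ∈ S` is `ξ i j`, so distinct rows outside `S` use independent
parts of `ξ`. -/
def crossFlip (S : Finset (Fin n)) (ξ ω : Fin n → Fin n → Bool) : Fin n → Fin n → Bool :=
  fun i j ↦ xor (ω i j)
    (if i ∉ S ∧ j ∈ S then ξ i j else if i ∈ S ∧ j ∉ S then ξ j i else false)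

lemma crossFlip_involutive (S : Finset (Fin n)) (ξ : Fin n → Fin n → Bool) :
    Function.Involutive (crossFlip S ξ) := fun ω ↦ by
  funext i j
  rw [crossFlip, crossFlip, Bool.xor_assoc, Bool.xor_self, Bool.xor_false]

/-- The matrix `M - λ I`. -/
def shiftedSymMat {R : Type*} [CommRing R] (lam : R) (ω : Fin n → Fin n → Bool) :
    Matrix (Fin n) (Fin n) R :=
  symMat R ω - lam • 1

lemma symMat_crossFlip_of_mem {R : Type*} [Ring R] (ξ ω : Fin n → Fin n → Bool) {i j : Fin n}
    (hi : i ∉ S) (hj : j ∈ S) :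
    symMat R (crossFlip S ξ ω) i j = signb R (xor (ω (min i j) (max i j)) (ξ i j)) := by
  rcases le_total i j with h | h <;> simp [symMat, crossFlip, h, hi, hj]

lemma symMat_crossFlip_of_notMem {R : Type*} [Ring R] (ξ ω : Fin n → Fin n → Bool) {i j : Fin n}
    (hi : i ∉ S) (hj : j ∉ S) : symMat R (crossFlip S ξ ω) i j = symMat R ω i j := by
  rcases le_total i j with h | h <;> simp [symMat, crossFlip, h, hi, hj]

lemma shiftedSymMat_crossFlip_mulVec {R : Type*} [CommRing R] (lam : R) (v : Fin n → R)
    (ξ ω : Fin n → Fin n → Bool) {i : Fin n} (hi : i ∉ S) :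
    (shiftedSymMat lam (crossFlip S ξ ω) *ᵥ v) i =
      ∑ j ∈ S, signb R (xor (ω (min i j) (max i j)) (ξ i j)) * v j +
        (∑ j ∈ Sᶜ, symMat R ω i j * v j - lam * v i) := by
  have hsum : (symMat R (crossFlip S ξ ω) *ᵥ v) i =
      ∑ j ∈ S, signb R (xor (ω (min i j) (max i j)) (ξ i j)) * v j +
        ∑ j ∈ Sᶜ, symMat R ω i j * v j := by
    rw [mulVec, dotProduct, ← sum_add_sum_compl S]
    congr 1
    · exact sum_congr rfl fun j hj ↦ by rw [symMat_crossFlip_of_mem ξ ω hi hj]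
    · exact sum_congr rfl fun j hj ↦ by
        rw [symMat_crossFlip_of_notMem ξ ω hi (mem_compl.1 hj)]
  rw [shiftedSymMat, sub_mulVec, smul_mulVec, one_mulVec, Pi.sub_apply, hsum, Pi.smul_apply,
    smul_eq_mul, add_sub_assoc]

end Resampling

section AlmostOrthogonal

variable {p n : ℕ} {v : Fin n → ZMod p} {B x : ℝ}

/-- `v` is orthogonal to all but at most `B` rows of `A`. -/
def AlmostOrthogonal (B : ℝ) (A : Matrix (Fin n) (Fin n) (ZMod p)) (v : Fin n → ZMod p) : Prop :=
  n - B ≤ ({i | (A *ᵥ v) i = 0}.ncard : ℝ)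

lemma AlmostOrthogonal.rpow_le_prod {A : Matrix (Fin n) (Fin n) (ZMod p)}
    (hv : AlmostOrthogonal B A v) (hx : 0 < x) (hx1 : x ≤ 1) (K : Finset (Fin n)) :
    x ^ B ≤ ∏ i ∈ K, if (A *ᵥ v) i = 0 then 1 else x := by
  have hcount : #{i | (A *ᵥ v) i = 0} + #{i | (A *ᵥ v) i ≠ 0} = n := by
    rw [card_filter_add_card_filter_not, card_univ, Fintype.card_fin]
  have hmiss : (#{i ∈ K | (A *ᵥ v) i ≠ 0} : ℝ) ≤ B := by
    have hK : #{i ∈ K | (A *ᵥ v) i ≠ 0} ≤ #{i | (A *ᵥ v) i ≠ 0} :=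
      card_le_card (filter_subset_filter _ (subset_univ K))
    rw [AlmostOrthogonal, Set.ncard_eq_toFinset_card', Set.toFinset_ofPred] at hv
    have : (#{i | (A *ᵥ v) i = 0} : ℝ) + #{i | (A *ᵥ v) i ≠ 0} = n := by exact_mod_cast hcount
    have : (#{i ∈ K | (A *ᵥ v) i ≠ 0} : ℝ) ≤ #{i | (A *ᵥ v) i ≠ 0} := by exact_mod_cast hK
    linarith
  rw [prod_ite, prod_const_one, one_mul, prod_const, ← Real.rpow_natCast]
  exact Real.rpow_le_rpow_of_exponent_ge hx hx1 hmiss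

variable [NeZero p]

lemma expect_signb_xor_sum_le {ι : Type*} [Fintype ι] [DecidableEq ι] (hp : Odd p) (S : Finset ι)
    (v : ι → ZMod p) (w : ι → Bool) (d : ZMod p) (hx : 0 ≤ x) :
    𝔼 ξ : ι → Bool, (if ∑ j ∈ S, signb (ZMod p) (xor (w j) (ξ j)) * v j + d = 0 then 1 else x) ≤
      lazyProb S v 0 + x := by
  let flip : Equiv.Perm (ι → Bool) :=
    Function.Involutive.toPerm (fun ξ j ↦ xor (w j) (ξ j)) fun ξ ↦ by simp
  calc 𝔼 ξ : ι → Bool, (if ∑ j ∈ S, signb (ZMod p) (xor (w j) (ξ j)) * v j + d = 0 then 1 else x)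
      = 𝔼 ξ : ι → Bool, (if ∑ j ∈ S, signb (ZMod p) (ξ j) * v j + d = 0 then 1 else x) :=
        Fintype.expect_equiv flip _ _ fun _ ↦ rfl
    _ ≤ 𝔼 ξ : ι → Bool, ((if ∑ j ∈ S, signb (ZMod p) (ξ j) * v j = -d then 1 else 0) + x) := by
        refine expect_le_expect fun ξ _ ↦ ?_
        simp only [add_eq_zero_iff_eq_neg]
        split_ifs <;> linarith
    _ ≤ lazyProb S v 0 + x := by
        rw [expect_add_distrib, Fintype.expect_const, ← prob_eq_expect]
        gcongr
        exact prob_signb_sum_le hp S v (-d)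

lemma expect_prod_mulVec_eq_zero_le (hp : Odd p) (lam : ZMod p) (S : Finset (Fin n))
    (v : Fin n → ZMod p) (hx : 0 ≤ x) :
    𝔼 ω, ∏ i ∈ Sᶜ, (if (shiftedSymMat lam ω *ᵥ v) i = 0 then 1 else x) ≤
      (lazyProb S v 0 + x) ^ (n - #S) := by
  refine expect_le_of_forall_expect_perm_le (fun ξ ↦ (crossFlip_involutive S ξ).toPerm) _ fun ω ↦ ?_
  let rowFactor (i : Fin n) (ξ : Fin n → Bool) : ℝ :=
    if ∑ j ∈ S, signb (ZMod p) (xor (ω (min i j) (max i j)) (ξ j)) * v j +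
      (∑ j ∈ Sᶜ, symMat (ZMod p) ω i j * v j - lam * v i) = 0 then 1 else x
  calc 𝔼 ξ : Fin n → Fin n → Bool, ∏ i ∈ Sᶜ,
        (if (shiftedSymMat lam (crossFlip S ξ ω) *ᵥ v) i = 0 then 1 else x)
      = 𝔼 ξ : Fin n → Fin n → Bool, ∏ i ∈ Sᶜ, rowFactor i (ξ i) := by
        refine expect_congr rfl fun ξ _ ↦ prod_congr rfl fun i hi ↦ ?_
        simp only [shiftedSymMat_crossFlip_mulVec lam v ξ ω (mem_compl.1 hi), rowFactor]
    _ = ∏ i ∈ Sᶜ, 𝔼 ξ, rowFactor i ξ := expect_prod_pi _ _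
    _ ≤ ∏ _i ∈ Sᶜ, (lazyProb S v 0 + x) := by
        refine prod_le_prod (fun _ _ ↦ expect_nonneg fun _ _ ↦ ?_) fun _ _ ↦
          expect_signb_xor_sum_le hp S v _ _ hx
        simp only [rowFactor]
        split_ifs <;> positivity
    _ = (lazyProb S v 0 + x) ^ (n - #S) := by rw [prod_const, card_compl, Fintype.card_fin]

lemma prob_almostOrthogonal_mul_rpow_le (hp : Odd p) (lam : ZMod p) (S : Finset (Fin n))
    (v : Fin n → ZMod p) (B : ℝ) (hx : 0 < x) (hx1 : x ≤ 1) :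
    prob (fun ω ↦ AlmostOrthogonal B (shiftedSymMat lam ω) v) * x ^ B ≤
      (lazyProb S v 0 + x) ^ (n - #S) := by
  refine (prob_mul_le_expect (fun ω ↦ ?_) fun ω hω ↦ hω.rpow_le_prod hx hx1 Sᶜ).trans
    (expect_prod_mulVec_eq_zero_le hp lam S v hx.le)
  exact prod_nonneg fun _ _ ↦ by split_ifs <;> positivity

lemma prob_almostOrthogonal_le [Nontrivial (ZMod p)] (hp : Odd p) (lam : ZMod p)
    (S : Finset (Fin n)) (v : Fin n → ZMod p) :
    prob (fun ω ↦ AlmostOrthogonal (n / Real.log p) (shiftedSymMat lam ω) v) ≤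
      Real.exp n * (2 * lazyProb S v 0) ^ (n - #S) := by
  have hp0 : 0 < (p : ℝ) := by exact_mod_cast NeZero.pos p
  have hP : 1 / (p : ℝ) < lazyProb S v 0 := one_div_lt_lazyProb S v
  have hP0 : 0 < lazyProb S v 0 := (by positivity : 0 < 1 / (p : ℝ)).trans hP
  have hpow : Real.exp (-n) ≤ lazyProb S v 0 ^ (n / Real.log p) := by
    have hp1 : 1 < p := by
      have := ZMod.nontrivial_iff.1 ‹Nontrivial (ZMod p)›
      have := NeZero.ne p
      lia
    have hlog : 0 < Real.log p := Real.log_pos (by exact_mod_cast hp1)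
    calc Real.exp (-n) = (1 / (p : ℝ)) ^ (n / Real.log p) := by
          rw [Real.rpow_def_of_pos (by positivity), one_div, Real.log_inv]
          field_simp
      _ ≤ _ := by gcongr
  have h := prob_almostOrthogonal_mul_rpow_le hp lam S v (n / Real.log p) hP0
    (lazyProb_apply_zero_le_one S v)
  rw [← two_mul] at h
  calc prob (fun ω ↦ AlmostOrthogonal (n / Real.log p) (shiftedSymMat lam ω) v)
      = Real.exp n * (prob (fun ω ↦ AlmostOrthogonal (n / Real.log p) (shiftedSymMat lam ω) v) *
          Real.exp (-n)) := by
        rw [mul_left_comm, ← Real.exp_add, add_neg_cancel, Real.exp_zero, mul_one]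
    _ ≤ Real.exp n * (2 * lazyProb S v 0) ^ (n - #S) := by
        gcongr
        exact (mul_le_mul_of_nonneg_left hpow (prob_nonneg _)).trans h

end AlmostOrthogonal

section Counting

lemma sum_le_card_image_mul {α β : Type*} [DecidableEq β] {V : Finset α} {π : α → β} {f : α → ℝ}
    {M : ℝ} (h : ∀ v ∈ V, f v * #{u ∈ V | π u = π v} ≤ M) :
    ∑ v ∈ V, f v ≤ #(V.image π) * M := by
  rw [← sum_fiberwise_of_maps_to fun v hv ↦ mem_image_of_mem π hv, ← nsmul_eq_mul]
  refine sum_le_card_nsmul _ _ _ fun b hb ↦ ?_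
  obtain ⟨v, hv, rfl⟩ := mem_image.1 hb
  have hpos : 0 < (#{u ∈ V | π u = π v} : ℝ) := by
    exact Nat.cast_pos.2 (card_pos.2 ⟨v, mem_filter.2 ⟨hv, rfl⟩⟩)
  calc ∑ u ∈ V with π u = π v, f u ≤ #{u ∈ V | π u = π v} • (M / #{u ∈ V | π u = π v}) := by
        refine sum_le_card_nsmul _ _ _ fun u hu ↦ ?_
        obtain ⟨huV, hu⟩ := mem_filter.1 hu
        rw [le_div_iff₀ hpos, ← hu]
        exact h u huV
    _ = M := by rw [nsmul_eq_mul, mul_div_cancel₀ _ hpos.ne']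

lemma card_filter_forall_mem {ι β : Type*} [Fintype ι] [DecidableEq ι] [Fintype β] [DecidableEq β]
    (K : Finset ι) (A : Finset β) :
    #{v : ι → β | ∀ i ∈ K, v i ∈ A} = #A ^ #K * Fintype.card β ^ (Fintype.card ι - #K) := by
  have hpi : ({v | ∀ i ∈ K, v i ∈ A} : Finset (ι → β)) =
      Fintype.piFinset fun i ↦ if i ∈ K then A else univ := by
    ext v
    simp only [mem_filter_univ, Fintype.mem_piFinset]
    refine forall_congr' fun i ↦ ?_
    split_ifs with hi <;> simp [hi]
  rw [hpi, Fintype.card_piFinset]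
  simp only [apply_ite Finset.card, card_univ]
  rw [prod_ite, prod_const, prod_const, filter_not, filter_mem_eq_inter, univ_inter,
    ← compl_eq_univ_sdiff, card_compl]

lemma sum_le_of_forall_mem_nearPeriods {p : ℕ} [NeZero p] {ι : Type*} [Fintype ι]
    {S K : Finset ι} {η M : ℝ} {V : Finset (ι → ZMod p)} {f : (ι → ZMod p) → ℝ}
    (hV : ∀ v ∈ V, ∀ i ∈ K, v i ∈ nearPeriods S v η) (hf : ∀ v ∈ V, 0 ≤ f v) (hM : 0 ≤ M)
    (h : ∀ v ∈ V, f v * (#(nearPeriods S v η) ^ #K * p ^ (Fintype.card ι - #K)) ≤ M) :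
    ∑ v ∈ V, f v ≤ p ^ #S * M := by
  classical
  have hfiber (v : ι → ZMod p) (hv : v ∈ V) : f v * #{u ∈ V | S.restrict u = S.restrict v} ≤ M := by
    have hsub : {u ∈ V | S.restrict u = S.restrict v} ⊆
        ({u | ∀ i ∈ K, u i ∈ nearPeriods S v η} : Finset (ι → ZMod p)) := by
      intro u hu
      obtain ⟨huV, huv⟩ := mem_filter.1 hu
      have huv : ∀ i ∈ S, u i = v i := fun i hi ↦ congr_fun huv ⟨i, hi⟩
      rw [mem_filter_univ, ← nearPeriods_congr huv]
      exact hV u huV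
    have hcard := card_le_card hsub
    rw [card_filter_forall_mem, ZMod.card] at hcard
    refine (mul_le_mul_of_nonneg_left ?_ (hf v hv)).trans (h v hv)
    exact_mod_cast hcard
  have himage : #(V.image S.restrict) ≤ p ^ #S := by
    refine (card_le_univ _).trans_eq ?_
    rw [Fintype.card_fun, ZMod.card, Fintype.card_coe]
  calc ∑ v ∈ V, f v ≤ #(V.image S.restrict) * M := sum_le_card_image_mul hfiber
    _ ≤ p ^ #S * M := by
        gcongr
        exact_mod_cast himage

lemma card_filter_ne_zero_le_mul_pow_le {β : Type*} [Fintype β] [DecidableEq β] [Zero β] (n m : ℕ)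
    {y : ℝ} (hy : 0 ≤ y) (hy1 : y ≤ 1) :
    #{v : Fin n → β | #{i | v i ≠ 0} ≤ m} * y ^ m ≤ (1 + Fintype.card β * y) ^ n := by
  let weight (b : β) : ℝ := if b = 0 then 1 else y
  have hweight (b : β) : 0 ≤ weight b := by simp only [weight]; split_ifs <;> positivity
  calc #{v : Fin n → β | #{i | v i ≠ 0} ≤ m} * y ^ m
      ≤ ∑ v : Fin n → β with #{i | v i ≠ 0} ≤ m, ∏ i, weight (v i) := by
        rw [← nsmul_eq_mul]
        refine card_nsmul_le_sum _ _ _ fun v hv ↦ ?_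
        rw [prod_ite, prod_const_one, one_mul, prod_const]
        exact pow_le_pow_of_le_one hy hy1 (mem_filter.1 hv).2
    _ ≤ ∑ v : Fin n → β, ∏ i, weight (v i) :=
        sum_le_univ_sum_of_nonneg fun v ↦ prod_nonneg fun i _ ↦ hweight _
    _ = (∑ b, weight b) ^ n := (Fintype.sum_pow weight n).symm
    _ ≤ (1 + Fintype.card β * y) ^ n := by
        refine pow_le_pow_left₀ (sum_nonneg fun b _ ↦ hweight b) ?_ n
        calc ∑ b, weight b ≤ ∑ b : β, ((if b = 0 then 1 else 0) + y) :=
              sum_le_sum fun b _ ↦ by simp only [weight]; split_ifs <;> linarith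
          _ = 1 + Fintype.card β * y := by
              rw [sum_add_distrib, sum_ite_eq', if_pos (mem_univ _), sum_const, card_univ,
                nsmul_eq_mul]

end Counting

section UnionBound

variable {p n : ℕ} {x y : ℝ}

/-- The nonzero vectors with at most `m` nonzero coordinates. -/
def sparseVectors (p n m : ℕ) [NeZero p] : Finset (Fin n → ZMod p) :=
  {v | v ≠ 0 ∧ #{i | v i ≠ 0} ≤ m}

/-- The vectors all of whose coordinates outside `S` are near-periods of the lazy walk on `S`, while
there are few such near-periods compared with the inverse return probability of that walk. -/
def concentratedVectors [NeZero p] (S : Finset (Fin n)) (J : ℕ) : Finset (Fin n → ZMod p) :=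
  {v | (∀ i ∈ Sᶜ, v i ∈ nearPeriods S v (1 / 2 / 4 ^ J)) ∧
    #(nearPeriods S v (1 / 2 / 4 ^ J)) * 2 ^ J * lazyProb S v 0 ≤ 4}

/-- The vectors whose coordinates in `K` are near-periods of the lazy walk on `S`, whose
near-periods form a small proportion of `ZMod p`, and for which the lazy walk on some other set of
at most `m` coordinates is nearly uniform. -/
def equidistributedVectors [NeZero p] (S K : Finset (Fin n)) (m J : ℕ) : Finset (Fin n → ZMod p) :=
  {v | (∀ i ∈ K, v i ∈ nearPeriods S v (1 / 2 / 4 ^ J)) ∧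
    #(nearPeriods S v (1 / 2 / 4 ^ J)) * 2 ^ J ≤ 4 * (p : ℝ) ∧
    ∃ S' : Finset (Fin n), #S' ≤ m ∧ lazyProb S' v 0 ≤ 2 / p}

variable [NeZero p]

lemma prob_exists_sparse_mul_le (hp : Odd p) (lam : ZMod p) (m : ℕ) (B : ℝ) (hx : 0 < x)
    (hx1 : x ≤ 1) (hy : 0 ≤ y) (hy1 : y ≤ 1) :
    prob (fun ω ↦ ∃ v ∈ sparseVectors p n m, AlmostOrthogonal B (shiftedSymMat lam ω) v) *
      (x ^ B * y ^ m) ≤ (3 / 4 + x) ^ (n - 1) * (1 + p * y) ^ n := by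
  have hsingle (v : Fin n → ZMod p) (hv : v ∈ sparseVectors p n m) :
      prob (fun ω ↦ AlmostOrthogonal B (shiftedSymMat lam ω) v) ≤
        (3 / 4 + x) ^ (n - 1) / x ^ B := by
    obtain ⟨i, hi⟩ := Function.ne_iff.1 (mem_filter.1 hv).2.1
    rw [le_div_iff₀ (by positivity)]
    simpa only [lazyProb_singleton_apply_zero hi, card_singleton] using
      prob_almostOrthogonal_mul_rpow_le hp lam {i} v B hx hx1
  have hcard : #(sparseVectors p n m) * y ^ m ≤ (1 + p * y) ^ n := by
    refine le_trans ?_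
      ((card_filter_ne_zero_le_mul_pow_le (β := ZMod p) n m hy hy1).trans_eq (by rw [ZMod.card]))
    gcongr
    exact fun v hv ↦ mem_filter_univ _ |>.2 (mem_filter.1 hv).2.2
  calc prob (fun ω ↦ ∃ v ∈ sparseVectors p n m, AlmostOrthogonal B (shiftedSymMat lam ω) v) *
        (x ^ B * y ^ m)
      ≤ #(sparseVectors p n m) * ((3 / 4 + x) ^ (n - 1) / x ^ B) * (x ^ B * y ^ m) := by
        gcongr
        exact prob_exists_mem_le_card_mul _ _ hsingle
    _ = (3 / 4 + x) ^ (n - 1) * (#(sparseVectors p n m) * y ^ m) := by field_simp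
    _ ≤ (3 / 4 + x) ^ (n - 1) * (1 + p * y) ^ n := by gcongr

variable [Nontrivial (ZMod p)]

lemma prob_exists_concentrated_le (hp : Odd p) (lam : ZMod p) (S : Finset (Fin n)) (J : ℕ) :
    prob (fun ω ↦ ∃ v ∈ concentratedVectors S J,
        AlmostOrthogonal (n / Real.log p) (shiftedSymMat lam ω) v) ≤
      p ^ #S * (Real.exp n * (8 / 2 ^ J) ^ (n - #S) * p ^ #S) := by
  refine (prob_exists_mem_le_sum _ _).trans <|
    sum_le_of_forall_mem_nearPeriods (fun v hv ↦ (mem_filter.1 hv).2.1) (fun _ _ ↦ prob_nonneg _)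
      (by positivity) fun v hv ↦ ?_
  set A := nearPeriods S v (1 / 2 / 4 ^ J)
  have hA : #A * (2 * lazyProb S v 0) ≤ 8 / 2 ^ J := by
    rw [le_div_iff₀ (by positivity)]
    linarith [(mem_filter.1 hv).2.2]
  have hP := lazyProb_nonneg S v 0
  calc prob (fun ω ↦ AlmostOrthogonal (n / Real.log p) (shiftedSymMat lam ω) v) *
        (#A ^ #Sᶜ * p ^ (Fintype.card (Fin n) - #Sᶜ))
      ≤ Real.exp n * (2 * lazyProb S v 0) ^ (n - #S) * (#A ^ (n - #S) * p ^ #S) := by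
        rw [card_compl, Fintype.card_fin, Nat.sub_sub_self (card_finset_fin_le S)]
        gcongr
        exact prob_almostOrthogonal_le hp lam S v
    _ = Real.exp n * (#A * (2 * lazyProb S v 0)) ^ (n - #S) * p ^ #S := by
        rw [mul_pow]
        ring
    _ ≤ Real.exp n * (8 / 2 ^ J) ^ (n - #S) * p ^ #S := by gcongr

lemma prob_almostOrthogonal_mul_pow_le (hp : Odd p) (hp4 : 4 ≤ p) (lam : ZMod p) {m : ℕ}
    {S : Finset (Fin n)} (hS : #S ≤ m) {v : Fin n → ZMod p} (hP : lazyProb S v 0 ≤ 2 / p) :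
    prob (fun ω ↦ AlmostOrthogonal (n / Real.log p) (shiftedSymMat lam ω) v) * p ^ n ≤
      Real.exp n * 4 ^ n * p ^ m := by
  have hp1 : 1 ≤ (p : ℝ) := by exact_mod_cast NeZero.one_le
  have hp4' : 4 / (p : ℝ) ≤ 1 := (div_le_one₀ (by positivity)).2 (by exact_mod_cast hp4)
  have hP0 := lazyProb_nonneg S v 0
  calc prob (fun ω ↦ AlmostOrthogonal (n / Real.log p) (shiftedSymMat lam ω) v) * p ^ n
      ≤ Real.exp n * (4 / p) ^ (n - m) * (p ^ (n - m) * p ^ m) := by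
        gcongr ?_ * ?_
        · refine (prob_almostOrthogonal_le hp lam S v).trans ?_
          gcongr
          calc (2 * lazyProb S v 0) ^ (n - #S) ≤ (4 / p) ^ (n - #S) := by
                gcongr
                linarith [show 2 * (2 / (p : ℝ)) = 4 / p by ring]
            _ ≤ (4 / p) ^ (n - m) := pow_le_pow_of_le_one (by positivity) hp4' (by lia)
        · rw [← pow_add]
          exact pow_le_pow_right₀ hp1 (by lia)
    _ = Real.exp n * 4 ^ (n - m) * p ^ m := by
        rw [div_pow]
        field_simp
    _ ≤ Real.exp n * 4 ^ n * p ^ m := by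
        gcongr
        · norm_num
        · exact n.sub_le m

lemma prob_exists_equidistributed_le (hp : Odd p) (hp4 : 4 ≤ p) (lam : ZMod p)
    (S K : Finset (Fin n)) (m J : ℕ) :
    prob (fun ω ↦ ∃ v ∈ equidistributedVectors S K m J,
        AlmostOrthogonal (n / Real.log p) (shiftedSymMat lam ω) v) ≤
      p ^ #S * (Real.exp n * 4 ^ n * p ^ m * (4 / 2 ^ J) ^ #K) := by
  refine (prob_exists_mem_le_sum _ _).trans <|
    sum_le_of_forall_mem_nearPeriods (fun v hv ↦ (mem_filter.1 hv).2.1) (fun _ _ ↦ prob_nonneg _)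
      (by positivity) fun v hv ↦ ?_
  obtain ⟨-, -, hA, S', hS', hP⟩ := mem_filter.1 hv
  set A := nearPeriods S v (1 / 2 / 4 ^ J)
  have hA : (#A : ℝ) ≤ 4 / 2 ^ J * p := by
    rw [div_mul_eq_mul_div, le_div_iff₀ (by positivity)]
    exact hA
  rw [Fintype.card_fin]
  have hK : #K ≤ n := card_finset_fin_le K
  calc prob (fun ω ↦ AlmostOrthogonal (n / Real.log p) (shiftedSymMat lam ω) v) *
        (#A ^ #K * p ^ (n - #K))
      ≤ prob (fun ω ↦ AlmostOrthogonal (n / Real.log p) (shiftedSymMat lam ω) v) *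
          ((4 / 2 ^ J * p) ^ #K * p ^ (n - #K)) := by
        gcongr
        exact prob_nonneg _
    _ = prob (fun ω ↦ AlmostOrthogonal (n / Real.log p) (shiftedSymMat lam ω) v) * p ^ n *
          (4 / 2 ^ J) ^ #K := by
        rw [mul_pow, mul_assoc (_ ^ #K), ← pow_add, Nat.add_sub_cancel' hK]
        ring
    _ ≤ Real.exp n * 4 ^ n * p ^ m * (4 / 2 ^ J) ^ #K := by
        gcongr ?_ * _
        exact prob_almostOrthogonal_mul_pow_le hp hp4 lam hS' hP

end UnionBound

section Chunks

lemma exists_pairwiseDisjoint_card_eq {ι : Type*} [Fintype ι] {T : Finset ι} {m N : ℕ}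
    {good : Finset ι → Prop} (hm : m ≠ 0)
    (h : ∀ R, Disjoint R T → Fintype.card ι ≤ #R + #T + N → ∃ S ⊆ R, #S = m ∧ good S)
    (k : ℕ) (hk : k * m ≤ N + m) :
    ∃ 𝒮 : Finset (Finset ι), #𝒮 = k ∧ (𝒮 : Set (Finset ι)).PairwiseDisjoint id ∧
      ∀ S ∈ 𝒮, #S = m ∧ Disjoint S T ∧ good S := by
  classical
  induction k with
  | zero => exact ⟨∅, by simp⟩
  | succ k ih =>
    rw [add_one_mul] at hk
    obtain ⟨𝒮, hcard, hdisj, hgood⟩ := ih (by lia)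
    have hunion : #(T ∪ 𝒮.biUnion id) ≤ #T + N := by
      refine (card_union_le _ _).trans (Nat.add_le_add_left ?_ _)
      exact (card_biUnion_le_card_mul _ _ m fun S hS ↦ (hgood S hS).1.le).trans (by lia)
    have hcompl := card_add_card_compl (T ∪ 𝒮.biUnion id)
    obtain ⟨S, hSR, hSm, hS⟩ := h (T ∪ 𝒮.biUnion id)ᶜ
      (disjoint_compl_left.mono_right subset_union_left) (by lia)
    have hSdisj : Disjoint S (T ∪ 𝒮.biUnion id) := disjoint_compl_left.mono_left hSR
    rw [disjoint_union_right, disjoint_biUnion_right] at hSdisj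
    have hSmem : S ∉ 𝒮 := by
      intro hmem
      rw [disjoint_self_iff_empty _ |>.1 (hSdisj.2 S hmem), card_empty] at hSm
      exact hm hSm.symm
    refine ⟨cons S 𝒮 hSmem, by rw [card_cons, hcard], ?_, ?_⟩
    · rw [coe_cons]
      exact hdisj.insert fun S' hS' _ ↦ hSdisj.2 S' hS'
    · rw [forall_mem_cons]
      exact ⟨⟨hSm, hSdisj.1, hS⟩, hgood⟩

variable {p n m J : ℕ} {C : ℝ} {v : Fin n → ZMod p}

/-- Property (†): outside every set of `⌈n / 4⌉` coordinates there are at least `n / (2 m)` pairwise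
disjoint sets of `m` coordinates on which `v` has discrepancy at most `C / p ^ 2`. -/
def ManyChunks (C : ℝ) (m : ℕ) (v : Fin n → ZMod p) : Prop :=
  ∀ T : Finset (Fin n), #T = ⌈(n : ℝ) / 4⌉₊ →
    ∃ 𝒮 : Finset (Finset (Fin n)), (𝒮 : Set (Finset (Fin n))).PairwiseDisjoint id ∧
      (∀ S ∈ 𝒮, #S = m ∧ Disjoint S T ∧ disc p (fun i : S ↦ v i) ≤ C / (p : ℝ) ^ 2) ∧
      (n : ℝ) / (2 * m) ≤ #𝒮

lemma manyChunks_of_forall_exists (hm : m ≠ 0) (hmn : 8 * m + 8 ≤ n)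
    (h : ∀ R : Finset (Fin n), n + 8 * m ≤ 8 * #R →
      ∃ S ⊆ R, #S = m ∧ disc p (fun i : S ↦ v i) ≤ C / (p : ℝ) ^ 2) :
    ManyChunks C m v := by
  intro T hT
  have hTn : 4 * #T ≤ n + 4 := by
    have := Nat.ceil_lt_add_one (by positivity : 0 ≤ (n : ℝ) / 4)
    rw [← hT] at this
    exact_mod_cast (by linarith : 4 * (#T : ℝ) ≤ n + 4)
  have hk : ⌈(n : ℝ) / (2 * m)⌉₊ * m ≤ n / 2 + m := by
    have := Nat.ceil_lt_add_one (by positivity : 0 ≤ (n : ℝ) / (2 * m))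
    have : (⌈(n : ℝ) / (2 * m)⌉₊ : ℝ) * m ≤ (n / (2 * m) + 1) * m := by gcongr
    have : 2 * ((⌈(n : ℝ) / (2 * m)⌉₊ : ℝ) * m) ≤ n + 2 * m := by
      refine (mul_le_mul_of_nonneg_left this zero_le_two).trans_eq ?_
      field_simp
    have : 2 * (⌈(n : ℝ) / (2 * m)⌉₊ * m) ≤ n + 2 * m := by exact_mod_cast this
    lia
  obtain ⟨𝒮, hcard, hdisj, hgood⟩ :=
    exists_pairwiseDisjoint_card_eq (T := T) (N := n / 2) hm
      (fun R _ hR ↦ h R (by rw [Fintype.card_fin] at hR; lia)) _ hk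
  exact ⟨𝒮, hdisj, hgood, hcard ▸ Nat.le_ceil _⟩

variable [Fact p.Prime]

lemma manyChunks_of_sq_le (hp : Odd p) (hpC : (p : ℝ) ^ 2 ≤ C) (hm : m ≠ 0) (hmn : 8 * m + 8 ≤ n)
    (v : Fin n → ZMod p) : ManyChunks C m v := by
  refine manyChunks_of_forall_exists hm hmn fun R hR ↦ ?_
  obtain ⟨S, hSR, hSm⟩ := exists_subset_card_eq (by lia : m ≤ #R)
  have hp0 : 0 < (p : ℝ) := by exact_mod_cast NeZero.pos p
  refine ⟨S, hSR, hSm, (disc_le_lazyExcess hp S v).trans ?_⟩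
  calc lazyExcess S v 0 ≤ 1 :=
        (sub_le_self _ (by positivity)).trans (lazyProb_apply_zero_le_one S v)
    _ ≤ C / (p : ℝ) ^ 2 := (one_le_div (by positivity)).2 hpC

lemma exists_subset_lazyExcess_le_or_forall_mem_nearPeriods_four_pow
    (hm : 16 * 4 ^ J * Real.log p ≤ m) (R : Finset (Fin n)) (v : Fin n → ZMod p) :
    ∃ S ⊆ R, #S ≤ m ∧ (lazyExcess S v 0 ≤ 1 / (p : ℝ) ^ 2 ∨
      ∀ i ∈ R \ S, v i ∈ nearPeriods S v (1 / 2 / 4 ^ J)) := by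
  have hη4 : (1 / 2 / 4 ^ J : ℝ) ≤ 4 :=
    (div_le_self (by positivity) (one_le_pow₀ (by norm_num))).trans (by norm_num)
  refine exists_subset_lazyExcess_le_or_forall_mem_nearPeriods R v (by positivity) hη4 ?_
  convert hm using 2
  field_simp
  norm_num

lemma exists_subset_disc_le_or_forall_mem_nearPeriods (hp : Odd p)
    (hm : 16 * 4 ^ J * Real.log p ≤ m) {R : Finset (Fin n)} (hR : m ≤ #R) (v : Fin n → ZMod p) :
    (∃ S ⊆ R, #S = m ∧ disc p (fun i : S ↦ v i) ≤ 1 / (p : ℝ) ^ 2) ∨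
      ∃ S ⊆ R, #S ≤ m ∧ ∀ i ∈ R \ S, v i ∈ nearPeriods S v (1 / 2 / 4 ^ J) := by
  obtain ⟨S, hSR, hSm, hS⟩ :=
    exists_subset_lazyExcess_le_or_forall_mem_nearPeriods_four_pow hm R v
  refine hS.symm.elim (fun hstuck ↦ .inr ⟨S, hSR, hSm, hstuck⟩) fun hS ↦ .inl ?_
  obtain ⟨S', hSS', hS'R, hS'm⟩ := exists_subsuperset_card_eq hSR hSm hR
  refine ⟨S', hS'R, hS'm, (disc_le_lazyExcess hp S' v).trans (le_trans ?_ hS)⟩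
  exact sub_le_sub_right (lazyProb_apply_zero_anti hSS' v) _

lemma mem_sparse_or_exists_mem_concentrated_or_lazyProb_le (hm : 16 * 4 ^ J * Real.log p ≤ m)
    (hv : v ≠ 0) :
    v ∈ sparseVectors p n m ∨ (∃ S, #S ≤ m ∧ v ∈ concentratedVectors S J) ∨
      ∃ S : Finset (Fin n), #S ≤ m ∧ lazyProb S v 0 ≤ 2 / p := by
  obtain ⟨S, -, hSm, hS | hstuck⟩ :=
    exists_subset_lazyExcess_le_or_forall_mem_nearPeriods_four_pow hm univ v
  · refine .inr (.inr ⟨S, hSm, ?_⟩)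
    have hp1 : 1 ≤ (p : ℝ) := by exact_mod_cast NeZero.one_le
    have hsq : 1 / (p : ℝ) ^ 2 ≤ 1 / p := by
      gcongr
      exact le_self_pow₀ hp1 two_ne_zero
    rw [lazyExcess] at hS
    linarith [show 2 / (p : ℝ) = 1 / p + 1 / p by ring]
  rw [← compl_eq_univ_sdiff] at hstuck
  obtain hA | hA := card_nearPeriods_eq_one_or S v J
  · refine .inl (mem_filter.2 ⟨mem_univ v, hv, (card_le_card fun i hi ↦ ?_).trans hSm⟩)
    by_contra hiS
    exact (mem_filter.1 hi).2 <| card_le_one.1 hA.le _ (hstuck i (mem_compl.2 hiS)) 0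
      (zero_mem_nearPeriods (by positivity))
  · exact .inr (.inl ⟨S, hSm, mem_filter.2 ⟨mem_univ v, hstuck, hA⟩⟩)

lemma card_nearPeriods_mul_two_pow_le (hJ : 2 ^ J ≤ 4 * p) (S : Finset (Fin n))
    (v : Fin n → ZMod p) : #(nearPeriods S v (1 / 2 / 4 ^ J)) * 2 ^ J ≤ 4 * (p : ℝ) := by
  obtain hA | hA := card_nearPeriods_eq_one_or S v J
  · rw [hA, Nat.cast_one, one_mul]
    exact_mod_cast hJ
  · have hp0 : 0 < (p : ℝ) := by exact_mod_cast NeZero.pos p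
    rw [← div_le_iff₀ hp0, ← mul_one_div]
    refine le_trans ?_ hA
    gcongr
    exact (one_div_lt_lazyProb S v).le

lemma mem_sparse_or_concentrated_or_equidistributed_of_not_manyChunks (hp : Odd p) (hC : 1 ≤ C)
    (hJ : 2 ^ J ≤ 4 * p) (hm0 : m ≠ 0) (hmn : 8 * m + 8 ≤ n) (hm : 16 * 4 ^ J * Real.log p ≤ m)
    (hv : v ≠ 0) (hchunks : ¬ ManyChunks C m v) :
    v ∈ sparseVectors p n m ∨ (∃ S, #S ≤ m ∧ v ∈ concentratedVectors S J) ∨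
      ∃ S K, #S ≤ m ∧ n ≤ 8 * #K ∧ v ∈ equidistributedVectors S K m J := by
  obtain ⟨R, hR, hbad⟩ : ∃ R : Finset (Fin n), n + 8 * m ≤ 8 * #R ∧
      ∀ S ⊆ R, #S = m → ¬ disc p (fun i : S ↦ v i) ≤ C / (p : ℝ) ^ 2 := by
    contrapose! hchunks
    exact manyChunks_of_forall_exists hm0 hmn hchunks
  obtain ⟨S, hSR, hSm, hdisc⟩ | ⟨S, hSR, hSm, hstuck⟩ :=
    exists_subset_disc_le_or_forall_mem_nearPeriods hp hm (by lia : m ≤ #R) v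
  · exact absurd (hdisc.trans (by gcongr)) (hbad S hSR hSm)
  refine (mem_sparse_or_exists_mem_concentrated_or_lazyProb_le hm hv).imp_right <|
    Or.imp_right fun hequi ↦ ⟨S, R \ S, hSm, ?_, ?_⟩
  · have := card_sdiff_add_card_eq_card hSR
    lia
  · exact mem_filter.2 ⟨mem_univ v, hstuck, card_nearPeriods_mul_two_pow_le hJ S v, hequi⟩

end Chunks

section Numerics

lemma two_pow_le_exp (k : ℕ) : (2 : ℝ) ^ k ≤ Real.exp (0.7 * k) := by
  rw [mul_comm, Real.exp_nat_mul]
  gcongr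
  rw [← Real.log_le_iff_le_exp (by norm_num)]
  linarith [Real.log_two_lt_d9]

lemma four_pow_le_exp (k : ℕ) : (4 : ℝ) ^ k ≤ Real.exp (1.4 * k) :=
  calc (4 : ℝ) ^ k = 2 ^ (2 * k) := by rw [pow_mul]; norm_num
    _ ≤ Real.exp (0.7 * (2 * k : ℕ)) := two_pow_le_exp (2 * k)
    _ = Real.exp (1.4 * k) := by push_cast; ring_nf

lemma half_pow_le_exp (k : ℕ) : (1 / 2 : ℝ) ^ k ≤ Real.exp (-0.69 * k) := by
  rw [mul_comm, Real.exp_nat_mul]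
  gcongr
  rw [← Real.log_le_iff_le_exp (by norm_num), one_div, Real.log_inv]
  linarith [Real.log_two_gt_d9]

variable {p m n : ℕ}

lemma pow_le_exp_of_mul_log_le (hp : 0 < p) (h : 1000 * (m * Real.log p) ≤ n) {k : ℕ}
    (hk : k ≤ m) : (p : ℝ) ^ k ≤ Real.exp (n / 1000) := by
  rw [← Real.exp_log (by exact_mod_cast hp : 0 < (p : ℝ)), ← Real.exp_nat_mul, Real.exp_le_exp]
  have : (k : ℝ) * Real.log p ≤ m * Real.log p := by gcongr
  linarith

end Numerics

section Events

variable {p m n : ℕ} [Fact p.Prime]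

lemma prob_exists_sparse_le_exp (hp : Odd p) (lam : ZMod p) (hlog : 45 ≤ Real.log p)
    (hmn : 1000 * (m * Real.log p) ≤ n) (hn : 1000 ≤ n) :
    prob (fun ω ↦ ∃ v ∈ sparseVectors p n m,
      AlmostOrthogonal (n / Real.log p) (shiftedSymMat lam ω) v) ≤
      Real.exp (-n / 9 - 2) := by
  have hp0 : 0 < (p : ℝ) := by exact_mod_cast NeZero.pos p
  have hp1 : 1 ≤ (p : ℝ) := by exact_mod_cast NeZero.one_le
  have hn' : (1000 : ℝ) ≤ n := by exact_mod_cast hn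
  have hlog100 : Real.log 100 ≤ 4.9 := by
    rw [Real.log_le_iff_le_exp (by norm_num)]
    calc (100 : ℝ) ≤ 2 ^ 7 := by norm_num
      _ ≤ Real.exp (0.7 * (7 : ℕ)) := two_pow_le_exp 7
      _ = Real.exp 4.9 := by norm_num
  have hx : Real.exp (-(4.9 * (n / 45))) ≤ (1 / 100) ^ (n / Real.log p) := by
    rw [Real.rpow_def_of_pos (by norm_num), one_div, Real.log_inv, neg_mul]
    gcongr
  have hy : Real.exp (-(n / 500)) ≤ (1 / (100 * p)) ^ m := by
    rw [← Real.exp_log (by positivity : 0 < 1 / (100 * (p : ℝ))), ← Real.exp_nat_mul, one_div,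
      Real.log_inv, Real.log_mul (by norm_num) hp0.ne']
    gcongr
    nlinarith
  have h76 : (3 / 4 + 1 / 100 : ℝ) ^ (n - 1) ≤ Real.exp (-0.24 * (n - 1)) := by
    rw [mul_comm, ← Nat.cast_pred (by lia), Real.exp_nat_mul]
    gcongr
    linarith [Real.add_one_le_exp (-0.24)]
  have h101 : (1 + p * (1 / (100 * p)) : ℝ) ^ n ≤ Real.exp (n * 0.01) := by
    rw [Real.exp_nat_mul]
    gcongr
    rw [mul_one_div, mul_comm 100, div_mul_cancel_left₀ hp0.ne']
    linarith [Real.add_one_le_exp 0.01]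
  have h := prob_exists_sparse_mul_le (n := n) (x := 1 / 100) (y := 1 / (100 * p)) hp lam m
    (n / Real.log p) (by norm_num) (by norm_num) (by positivity)
    (div_le_one₀ (by positivity) |>.2 (by linarith))
  have hexp := (mul_le_mul_of_nonneg_left (mul_le_mul hx hy (by positivity) (by positivity))
    (prob_nonneg _)).trans (h.trans (mul_le_mul h76 h101 (by positivity) (by positivity)))
  rw [← Real.exp_add, ← Real.exp_add, ← le_div_iff₀ (Real.exp_pos _), ← Real.exp_sub] at hexp
  refine hexp.trans (Real.exp_le_exp.2 ?_)
  linarith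

lemma prob_exists_mem_concentrated_le_exp (hp : Odd p) (lam : ZMod p)
    (hmn : 1000 * (m * Real.log p) ≤ n) (hm : 1000 * m ≤ n) (hn : 1000 ≤ n) :
    prob (fun ω ↦ ∃ S : Finset (Fin n), #S ≤ m ∧ ∃ v ∈ concentratedVectors S 64,
        AlmostOrthogonal (n / Real.log p) (shiftedSymMat lam ω) v) ≤
      Real.exp (-n / 9 - 2) := by
  have hsingle (S : Finset (Fin n)) (hSm : #S ≤ m) :
      prob (fun ω ↦ ∃ v ∈ concentratedVectors S 64,
        AlmostOrthogonal (n / Real.log p) (shiftedSymMat lam ω) v) ≤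
      Real.exp (n / 1000) * (Real.exp n * Real.exp (-0.69 * (61 * (n - m))) *
        Real.exp (n / 1000)) := by
    refine (prob_exists_concentrated_le hp lam S 64).trans ?_
    gcongr
    · exact pow_le_exp_of_mul_log_le (NeZero.pos p) hmn hSm
    · rw [show (8 / 2 ^ 64 : ℝ) = (1 / 2) ^ 61 by norm_num, ← pow_mul]
      refine (half_pow_le_exp _).trans (Real.exp_le_exp.2 ?_)
      have : (n : ℝ) ≤ (n - #S : ℕ) + m := by exact_mod_cast (by lia : n ≤ n - #S + m)
      push_cast
      linarith
    · exact pow_le_exp_of_mul_log_le (NeZero.pos p) hmn hSm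
  refine (prob_exists_and_le_card_mul (by positivity) hsingle).trans ?_
  rw [Fintype.card_finset, Fintype.card_fin, Nat.cast_pow, Nat.cast_ofNat]
  refine (mul_le_mul_of_nonneg_right (two_pow_le_exp n) (by positivity)).trans ?_
  simp only [← Real.exp_add]
  have hn : (1000 : ℝ) ≤ n := by exact_mod_cast hn
  have hm : 1000 * (m : ℝ) ≤ n := by exact_mod_cast hm
  exact Real.exp_le_exp.2 (by linarith)

lemma prob_exists_mem_equidistributed_le_exp (hp : Odd p) (hp4 : 4 ≤ p) (lam : ZMod p)
    (hmn : 1000 * (m * Real.log p) ≤ n) (hn : 1000 ≤ n) :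
    prob (fun ω ↦ ∃ SK : Finset (Fin n) × Finset (Fin n), (#SK.1 ≤ m ∧ n ≤ 8 * #SK.2) ∧
      ∃ v ∈ equidistributedVectors SK.1 SK.2 m 64,
        AlmostOrthogonal (n / Real.log p) (shiftedSymMat lam ω) v) ≤
      Real.exp (-n / 9 - 2) := by
  have hsingle (SK : Finset (Fin n) × Finset (Fin n))
      (hSK : #SK.1 ≤ m ∧ n ≤ 8 * #SK.2) :
      prob (fun ω ↦ ∃ v ∈ equidistributedVectors SK.1 SK.2 m 64,
        AlmostOrthogonal (n / Real.log p) (shiftedSymMat lam ω) v) ≤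
      Real.exp (n / 1000) * (Real.exp n * Real.exp (1.4 * n) * Real.exp (n / 1000) *
        Real.exp (-5 * n)) := by
    obtain ⟨hSm, hK⟩ := hSK
    refine (prob_exists_equidistributed_le hp hp4 lam SK.1 SK.2 m 64).trans ?_
    gcongr
    · exact pow_le_exp_of_mul_log_le (NeZero.pos p) hmn hSm
    · exact four_pow_le_exp n
    · exact pow_le_exp_of_mul_log_le (NeZero.pos p) hmn le_rfl
    · rw [show (4 / 2 ^ 64 : ℝ) = (1 / 2) ^ 62 by norm_num, ← pow_mul]
      refine (half_pow_le_exp _).trans (Real.exp_le_exp.2 ?_)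
      have hK : (n : ℝ) ≤ 8 * #SK.2 := by exact_mod_cast hK
      push_cast
      linarith
  refine (prob_exists_and_le_card_mul (by positivity) hsingle).trans ?_
  rw [Fintype.card_prod, Fintype.card_finset, Fintype.card_fin, ← mul_pow, Nat.cast_pow]
  refine (mul_le_mul_of_nonneg_right (four_pow_le_exp n) (by positivity)).trans ?_
  simp only [← Real.exp_add]
  have hn : (1000 : ℝ) ≤ n := by exact_mod_cast hn
  exact Real.exp_le_exp.2 (by linarith)

end Events

section Assembly

variable {p m n : ℕ}

lemma one_sub_exp_le_prob_manyChunks [Fact p.Prime] (hp : Odd p) (hp66 : 2 ^ 66 < p) (lam : ZMod p)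
    (hm0 : m ≠ 0) (hm : 2 ^ 132 * Real.log p ≤ m) (hmn : 1000 * (m * Real.log p) ≤ n) {C : ℝ}
    (hC : 1 ≤ C) :
    1 - Real.exp (-n / 9) ≤ prob fun ω ↦ ∀ v : Fin n → ZMod p, v ≠ 0 →
      AlmostOrthogonal (n / Real.log p) (shiftedSymMat lam ω) v → ManyChunks C m v := by
  have hlog : 45 ≤ Real.log p := by
    have hlog2 : Real.log (2 ^ 66) ≤ Real.log p :=
      Real.log_le_log (by positivity) (by exact_mod_cast hp66.le)
    rw [Real.log_pow] at hlog2
    push_cast at hlog2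
    linarith [Real.log_two_gt_d9]
  have hmn1 : 1000 * m ≤ n := by
    have : (m : ℝ) * 1 ≤ m * Real.log p := by gcongr; linarith
    exact_mod_cast (by linarith : (1000 : ℝ) * m ≤ n)
  rw [← one_sub_prob_not]
  refine sub_le_sub_left ?_ 1
  have hsparse := prob_exists_sparse_le_exp hp lam hlog hmn (by lia)
  have hconc := prob_exists_mem_concentrated_le_exp hp lam hmn hmn1 (by lia)
  have hequi := prob_exists_mem_equidistributed_le_exp hp (by lia) lam hmn (by lia)
  refine (prob_mono fun ω hω ↦ ?_).trans <| (prob_or_le _ _).trans <|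
    (add_le_add hsparse <| (prob_or_le _ _).trans <| add_le_add hconc hequi).trans ?_
  · push Not at hω
    obtain ⟨v, hv, horth, hchunks⟩ := hω
    obtain h | ⟨S, hS, h⟩ | ⟨S, K, hS, hK, h⟩ :=
      mem_sparse_or_concentrated_or_equidistributed_of_not_manyChunks (J := 64) hp hC (by lia) hm0
        (by lia) (by convert hm using 2; norm_num) hv hchunks
    · exact .inl ⟨v, h, horth⟩
    · exact .inr (.inl ⟨S, hS, v, h, horth⟩)
    · exact .inr (.inr ⟨(S, K), ⟨hS, hK⟩, v, h, horth⟩)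
  · rw [Real.exp_sub]
    have : 3 ≤ Real.exp 2 := by linarith [Real.add_one_le_exp 2]
    have : Real.exp (-n / 9) / Real.exp 2 ≤ Real.exp (-n / 9) / 3 := by gcongr
    linarith

lemma rpow_quarter_le_sqrt (n : ℕ) : (n : ℝ) ^ (1 / 4 : ℝ) ≤ √n := by
  obtain rfl | hn := n.eq_zero_or_pos
  · simp
  · rw [Real.sqrt_eq_rpow]
    exact Real.rpow_le_rpow_of_exponent_le (by exact_mod_cast hn) (by norm_num)

lemma one_le_log (hp : 2 < p) : 1 ≤ Real.log p := by
  have hp3 : (3 : ℝ) ≤ p := by exact_mod_cast hp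
  rw [Real.le_log_iff_exp_le (by linarith)]
  linarith [Real.exp_one_lt_d9]

lemma thousand_mul_ceil_mul_log_le (hp : 2 < p) (hpn : p ≤ Real.exp (1 / 2 ^ 80 * √n)) :
    1000 * (⌈2 ^ 132 * Real.log p⌉₊ * Real.log p) ≤ n := by
  have hlog := one_le_log hp
  have hlogn : Real.log p ≤ 1 / 2 ^ 80 * √n := (Real.log_le_iff_le_exp (by positivity)).2 hpn
  set L := Real.log p
  have hceil : ⌈2 ^ 132 * L⌉₊ ≤ 2 ^ 133 * L := by
    have := Nat.ceil_lt_add_one (by positivity : 0 ≤ 2 ^ 132 * L)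
    linarith
  calc 1000 * (⌈2 ^ 132 * L⌉₊ * L) ≤ 1000 * (2 ^ 133 * L * L) := by gcongr
    _ ≤ 1000 * (2 ^ 133 * (1 / 2 ^ 80 * √n) * (1 / 2 ^ 80 * √n)) := by gcongr
    _ = 1000 / 2 ^ 27 * √n ^ 2 := by ring
    _ ≤ 1 * √n ^ 2 := by gcongr; norm_num
    _ = n := by rw [one_mul, Real.sq_sqrt n.cast_nonneg]

theorem structure_theorem_many_chunks_general :
    ∃ c C : ℝ, 0 < c ∧ 0 < C ∧ ∀ n p : ℕ, p.Prime → 2 < p → p ≤ Real.exp (c * √n) →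
      ∀ lam : ZMod p, 1 - Real.exp (-n / 9) ≤ prob fun ω ↦ ∀ v : Fin n → ZMod p, v ≠ 0 →
        AlmostOrthogonal (n / Real.log p) (shiftedSymMat lam ω) v →
          ManyChunks C ⌈C * Real.log p⌉₊ v := by
  refine ⟨1 / 2 ^ 80, 2 ^ 132, by positivity, by positivity, fun n p hprime hp2 hpn lam ↦ ?_⟩
  have : Fact p.Prime := ⟨hprime⟩
  have hp : Odd p := hprime.odd_of_ne_two hp2.ne'
  have hlog := one_le_log hp2
  have hmn := thousand_mul_ceil_mul_log_le hp2 hpn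
  set m := ⌈2 ^ 132 * Real.log p⌉₊
  have hm : 2 ^ 132 * Real.log p ≤ m := Nat.le_ceil _
  have hm0 : m ≠ 0 := (Nat.ceil_pos.2 (by positivity)).ne'
  obtain hp66 | hp66 := le_or_gt p (2 ^ 66)
  · have hmn8 : 8 * m + 8 ≤ n := by
      have : (m : ℝ) * 1 ≤ m * Real.log p := by gcongr
      have : 1000 * m ≤ n := by exact_mod_cast (by linarith : (1000 : ℝ) * m ≤ n)
      lia
    have hsq : (p : ℝ) ^ 2 ≤ 2 ^ 132 := by exact_mod_cast Nat.pow_le_pow_left hp66 2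
    refine le_of_le_of_eq ?_ (prob_of_forall fun ω v _ _ ↦
      manyChunks_of_sq_le hp hsq hm0 hmn8 v).symm
    linarith [Real.exp_pos (-(n : ℝ) / 9)]
  · exact one_sub_exp_le_prob_manyChunks hp hp66 lam hm0 hm hmn (by norm_num)

end Assembly

/-- Main structure theorem: with probability at least `1 - exp(-n/9)`, every
nonzero vector orthogonal to at least `n - n/log p` rows of `M_n - λ I_n`
satisfies property (†): for every `T` of size `⌈n/4⌉` there are at least `n/(2m)`
pairwise disjoint sets `S ⊆ [n] \ T` of size `m = ⌈C log p⌉` with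
`disc(v|_S) ≤ C/p²`. -/
theorem structure_theorem_many_chunks :
    ∃ c C : ℝ, 0 < c ∧ 0 < C ∧ ∃ n₀ : ℕ, ∀ n : ℕ, n₀ ≤ n →
      ∀ p : ℕ, p.Prime → 2 < p →
        (p : ℝ) ≤ Real.exp (c * (n : ℝ) ^ ((1 : ℝ) / 4)) →
        ∀ lam : ZMod p, ∀ m : ℕ, m = ⌈C * Real.log p⌉₊ →
          prob (fun ω : Fin n → Fin n → Bool =>
              ∀ v : Fin n → ZMod p, v ≠ 0 →
                (n : ℝ) - (n : ℝ) / Real.log p ≤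
                  ({i | ((symMat (ZMod p) ω
                    - lam • (1 : Matrix (Fin n) (Fin n) (ZMod p))) *ᵥ v) i = 0}.ncard : ℝ) →
                ∀ T : Finset (Fin n), T.card = ⌈(n : ℝ) / 4⌉₊ →
                  ∃ 𝒮 : Finset (Finset (Fin n)),
                    (𝒮 : Set (Finset (Fin n))).PairwiseDisjoint id ∧
                    (∀ S ∈ 𝒮, S.card = m ∧ Disjoint S T ∧
                      disc p (fun i : S => v i) ≤ C / (p : ℝ) ^ 2) ∧
                    (n : ℝ) / (2 * m) ≤ (𝒮.card : ℝ))
            ≥ 1 - Real.exp (-(n : ℝ) / 9) := by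
  obtain ⟨c, C, hc, hC, h⟩ := structure_theorem_many_chunks_general
  refine ⟨c, C, hc, hC, 0, ?_⟩
  rintro n - p hprime hp2 hpn lam m rfl
  exact h n p hprime hp2 (hpn.trans (by gcongr; exact rpow_quarter_le_sqrt n)) lam
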